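/- arXiv:math/0607563 — 5 statements merged into one kernel-verified Lean document; each statement's English description precedes it below -/
import Mathlib

section
/- Let k ≥ 1 and n be natural numbers, A : Matrix (Fin n) (Fin n) (ZMod k), v : Fin n → ZMod k, and i : Fin n. Then ((A^j).mulVec v) i is a unit of ZMod k for every natural number j if and only if ((A^j).mulVec v) i is a unit of ZMod k for every j ≤ k^n. -/
/-!
The vectors `(A ^ j).mulVec v` are the iterates of the self-map `A.mulVec` of the finite set of
all vectors. By the pigeonhole principle a sequence of iterates in a set of `N` points enters a
cycle, and closes it up, within its first `N + 1` terms, so its first `N` terms already exhaust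
all its values.
-/

section Iterate

open Function

variable {α : Type*} [Finite α]

theorem exists_add_le_card_isPeriodicPt_iterate (f : α → α) (x : α) :
    ∃ m p, 0 < p ∧ m + p ≤ Nat.card α ∧ IsPeriodicPt f p (f^[m] x) := by
  obtain ⟨a, b, hlt, heq⟩ : ∃ a b : Fin (Nat.card α + 1), a < b ∧ f^[a] x = f^[b] x := by
    by_contra! hne
    simpa using Nat.card_le_card_of_injective _ (Injective.of_lt_imp_ne hne)
  refine ⟨a, b - a, by lia, by lia, ?_⟩
  calc f^[b - a] (f^[a] x) = f^[b - a + a] x := (iterate_add_apply ..).symm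
    _ = f^[b] x := by rw [Nat.sub_add_cancel hlt.le]
    _ = f^[a] x := heq.symm

theorem exists_lt_card_iterate_eq (f : α → α) (x : α) (j : ℕ) :
    ∃ r < Nat.card α, f^[r] x = f^[j] x := by
  obtain ⟨m, p, hp, hmp, hper⟩ := exists_add_le_card_isPeriodicPt_iterate f x
  obtain hjm | hmj := lt_or_ge j m
  · exact ⟨j, by lia, rfl⟩
  · have hmod : (j - m) % p < p := Nat.mod_lt _ hp
    refine ⟨(j - m) % p + m, by lia, ?_⟩
    calc f^[(j - m) % p + m] x = f^[(j - m) % p] (f^[m] x) := iterate_add_apply ..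
      _ = f^[j - m] (f^[m] x) := hper.iterate_mod_apply _
      _ = f^[j - m + m] x := (iterate_add_apply ..).symm
      _ = f^[j] x := by rw [Nat.sub_add_cancel hmj]

theorem forall_iterate_iff_forall_lt_card (f : α → α) (x : α) (P : α → Prop) :
    (∀ j, P (f^[j] x)) ↔ ∀ j < Nat.card α, P (f^[j] x) := by
  refine ⟨fun h j _ => h j, fun h j => ?_⟩
  obtain ⟨r, hr, hrj⟩ := exists_lt_card_iterate_eq f x j
  exact hrj ▸ h r hr

end Iterate

section Matrix

variable {ι R : Type*} [Fintype ι] [DecidableEq ι] [Semiring R]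

theorem matrix_pow_mulVec_eq_iterate (A : Matrix ι ι R) (v : ι → R) (j : ℕ) :
    (A ^ j).mulVec v = A.mulVec^[j] v :=
  (smul_iterate_apply A j v).symm

theorem isUnit_matrix_pow_mulVec_iff_finite_check_general [Finite R]
    (A : Matrix ι ι R) (v : ι → R) (i : ι) :
    (∀ j : ℕ, IsUnit (((A ^ j).mulVec v) i)) ↔
      ∀ j < Nat.card R ^ Fintype.card ι, IsUnit (((A ^ j).mulVec v) i) := by
  have card_vectors : Nat.card (ι → R) = Nat.card R ^ Fintype.card ι := by
    rw [Nat.card_fun, Nat.card_eq_fintype_card (α := ι)]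
  simp only [matrix_pow_mulVec_eq_iterate, ← card_vectors]
  exact forall_iterate_iff_forall_lt_card A.mulVec v fun w => IsUnit (w i)

end Matrix

/-- The infinite family of unit conditions on the coefficients
`((A ^ j).mulVec v) i` reduces to a finite check up to `k ^ n`. -/
theorem isUnit_matrix_pow_mulVec_iff_finite_check
    (k n : ℕ) (hk : 1 ≤ k)
    (A : Matrix (Fin n) (Fin n) (ZMod k)) (v : Fin n → ZMod k) (i : Fin n) :
    (∀ j : ℕ, IsUnit (((A ^ j).mulVec v) i)) ↔
      (∀ j ≤ k ^ n, IsUnit (((A ^ j).mulVec v) i)) := by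
  have : NeZero k := ⟨Nat.one_le_iff_ne_zero.mp hk⟩
  refine ⟨fun h j _ => h j, fun h =>
    (isUnit_matrix_pow_mulVec_iff_finite_check_general A v i).mpr fun j hj => h j ?_⟩
  simpa only [Nat.card_zmod, Fintype.card_fin] using hj.le
end

section
/- Let K be a field, N a natural number, M : Matrix (Fin N) (Fin N) K, v : Fin N → K, and f : (Fin N → K) →ₗ[K] K a linear functional. Then f ((M^j).mulVec v) = 0 for every natural number j if and only if f ((M^j).mulVec v) = 0 for every j < N. -/
open Module Polynomial Submodule

section

variable {R A P : Type*} [CommRing R] [Semiring A] [Algebra R A] [AddCommMonoid P] [Module R P]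

theorem pow_mem_span_image_pow_Iio_natDegree {p : R[X]} (hp : p.Monic) {a : A}
    (ha : aeval a p = 0) (j : ℕ) : a ^ j ∈ span R ((a ^ ·) '' Set.Iio p.natDegree) := by
  classical
  have hpow : a ^ j ∈ Algebra.adjoin R {a} := pow_mem (Algebra.self_mem_adjoin_singleton R a) j
  rwa [← Subalgebra.mem_toSubmodule, ← span_range_natDegree_eq_adjoin hp ha, Finset.coe_image,
    Finset.coe_range] at hpow

theorem forall_map_pow_eq_zero_iff_forall_lt_natDegree {p : R[X]} (hp : p.Monic) {a : A}
    (ha : aeval a p = 0) (φ : A →ₗ[R] P) :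
    (∀ j : ℕ, φ (a ^ j) = 0) ↔ ∀ j < p.natDegree, φ (a ^ j) = 0 := by
  refine ⟨fun h j _ ↦ h j, fun h j ↦ ?_⟩
  have hker : span R ((a ^ ·) '' Set.Iio p.natDegree) ≤ LinearMap.ker φ :=
    span_le.2 (Set.image_subset_iff.2 h)
  exact hker (pow_mem_span_image_pow_Iio_natDegree hp ha j)

end

/-- By the determinant trick (Cayley–Hamilton for finite modules), `T` is a root of a monic
polynomial of degree `spanFinrank`; dividing `X ^ j` by it expresses `T ^ j` through
lower powers. -/
theorem linear_functional_vanishes_on_orbit_iff_general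
    {R V P : Type*} [CommRing R] [AddCommGroup V] [Module R V] [Module.Finite R V]
    [AddCommMonoid P] [Module R P] (T : End R V) (v : V) (f : V →ₗ[R] P) :
    (∀ j : ℕ, f ((T ^ j) v) = 0) ↔
      ∀ j < (⊤ : Submodule R V).spanFinrank, f ((T ^ j) v) = 0 := by
  obtain ⟨p, hp, hdeg, hT⟩ := LinearMap.exists_monic_and_natDegree_eq_and_aeval_eq_zero R T
  rw [← hdeg]
  exact forall_map_pow_eq_zero_iff_forall_lt_natDegree hp hT (f ∘ₗ LinearMap.applyₗ v)

/-- A linear functional vanishes on the whole orbit `(M ^ j).mulVec v`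
if and only if it vanishes on the first `N` terms. -/
theorem linear_functional_vanishes_on_orbit_iff
    (K : Type*) [Field K] (N : ℕ)
    (M : Matrix (Fin N) (Fin N) K) (v : Fin N → K)
    (f : (Fin N → K) →ₗ[K] K) :
    (∀ j : ℕ, f ((M ^ j).mulVec v) = 0) ↔
      (∀ j < N, f ((M ^ j).mulVec v) = 0) := by
  simpa only [← Matrix.toLin'_pow, Matrix.toLin'_apply, ← finrank_eq_spanFinrank_of_free,
    finrank_fin_fun] using linear_functional_vanishes_on_orbit_iff_general M.toLin' v f
end

section
/- Let k ≥ 1. Let act : (List (ZMod k) → ZMod k) → List (ZMod k) → List (ZMod k) be the unique function satisfying act c [] = [] and act c (a :: u) = (a + c []) :: act (fun w => c (a :: w)) u for all c, a, u; this is the action on the rooted k-ary tree of the element of the infinite iterated wreath product ℤ/kℤ ≀ ℤ/kℤ ≀ ⋯ with portrait c. Then for every portrait c : List (ZMod k) → ZMod k, the map act c is spherically transitive — i.e. for every n and all lists u, v over ZMod k of length n there exists m : ℕ with (act c)^[m] u = v — if and only if for every n : ℕ the sum over all words w : Fin n → ZMod k of c (List.ofFn w) is a unit of the ring ZMod k.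 -/
/-!
Appending a last letter identifies the words of length `n + 1` with pairs (word of length `n`,
letter), and an element with portrait `c` acts on these pairs as the skew product
`(u, a) ↦ (act c u, a + c u)` over its action on level `n`. When level `n` is a single cycle, going
once around it adds the level sum `∑ c u` to the last letter and changes nothing else, so level
`n + 1` is a single cycle exactly when the multiples of that sum exhaust the alphabet. Over `ZMod k`
this means that the sum is a unit; now induct on the level.
-/

open Function Finset

/-- Transitivity of the forward iterates of `T` on `s`: all points of `s` are reached from each
one of them. Invariance of `s` under `T` is not part of the notion. -/
def IterateTransitiveOn {α : Type*} (T : α → α) (s : Set α) : Prop :=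
  ∀ x ∈ s, ∀ y ∈ s, ∃ m : ℕ, T^[m] x = y

namespace IterateTransitiveOn

variable {α β : Type*} {T : α → α}

theorem image_iff {T' : β → β} {φ : α → β} (hφ : Semiconj φ T T') (hinj : Injective φ)
    {s : Set α} : IterateTransitiveOn T' (φ '' s) ↔ IterateTransitiveOn T s := by
  simp only [IterateTransitiveOn, Set.forall_mem_image, ← (hφ.iterate_right _).eq, hinj.eq_iff]

theorem mem_periodicPts {s : Set α} (ht : IterateTransitiveOn T s) (hs : Set.MapsTo T s s) {x : α}
    (hx : x ∈ s) : x ∈ periodicPts T := by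
  obtain ⟨m, hm⟩ := ht (T x) (hs hx) x hx
  exact mk_mem_periodicPts m.succ_pos hm

theorem birkhoffSum_minimalPeriod {M : Type*} [AddCommMonoid M] {s : Finset α}
    (ht : IterateTransitiveOn T s) (hs : Set.MapsTo T s s) (f : α → M) {x : α} (hx : x ∈ s) :
    birkhoffSum T f (minimalPeriod T x) x = ∑ y ∈ s, f y := by
  refine sum_bij (fun i _ ↦ T^[i] x) (fun i _ ↦ hs.iterate i hx) ?_ ?_ (fun _ _ ↦ rfl)
  · intro i hi j hj hij
    exact iterate_injOn_Iio_minimalPeriod (mem_range.1 hi) (mem_range.1 hj) hij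
  · intro y hy
    obtain ⟨m, rfl⟩ := ht x hx y hy
    have hpos : 0 < minimalPeriod T x :=
      minimalPeriod_pos_of_mem_periodicPts (ht.mem_periodicPts hs hx)
    exact ⟨m % minimalPeriod T x, mem_range.2 (Nat.mod_lt _ hpos), iterate_mod_minimalPeriod_eq⟩

end IterateTransitiveOn

theorem birkhoffSum_mul_of_isPeriodicPt {α M : Type*} [AddCommMonoid M] {T : α → α} {x : α} {p : ℕ}
    (hp : IsPeriodicPt T p x) (f : α → M) (q : ℕ) :
    birkhoffSum T f (p * q) x = q • birkhoffSum T f p x := by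
  induction q with
  | zero => simp only [mul_zero, birkhoffSum_zero, zero_nsmul]
  | succ q ih => rw [mul_add_one, birkhoffSum_add, (hp.mul_const q).eq, ih, succ_nsmul]

/-- The skew product over `T : α → α` with cocycle `f : α → A`, where the fibre `A` is translated
by `f`. -/
def skewProduct {α A : Type*} [Add A] (T : α → α) (f : α → A) (p : α × A) : α × A :=
  (T p.1, p.2 + f p.1)

theorem iterate_skewProduct {α A : Type*} [AddCommMonoid A] (T : α → α) (f : α → A) (m : ℕ)
    (x : α) (a : A) : (skewProduct T f)^[m] (x, a) = (T^[m] x, a + birkhoffSum T f m x) := by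
  induction m with
  | zero => simp only [iterate_zero_apply, birkhoffSum_zero, add_zero]
  | succ m ih =>
    rw [iterate_succ_apply', ih, skewProduct, iterate_succ_apply', birkhoffSum_succ, add_assoc]

theorem iterateTransitiveOn_skewProduct_iff {α A : Type*} [AddCommGroup A] {T : α → α}
    {s : Finset α} (hne : s.Nonempty) (hs : Set.MapsTo T s s) (ht : IterateTransitiveOn T s)
    (f : α → A) :
    IterateTransitiveOn (skewProduct T f) ((s : Set α) ×ˢ Set.univ) ↔
      AddSubmonoid.multiples (∑ x ∈ s, f x) = ⊤ := by
  have sum_loops {x : α} (hx : x ∈ s) (q : ℕ) :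
      birkhoffSum T f (minimalPeriod T x * q) x = q • ∑ y ∈ s, f y := by
    rw [birkhoffSum_mul_of_isPeriodicPt (isPeriodicPt_minimalPeriod T x),
      ht.birkhoffSum_minimalPeriod hs f hx]
  constructor
  · intro hskew
    obtain ⟨x, hx⟩ := hne
    refine (AddSubmonoid.eq_top_iff' _).2 fun a ↦ ?_
    obtain ⟨m, hm⟩ := hskew (x, 0) ⟨hx, trivial⟩ (x, a) ⟨hx, trivial⟩
    obtain ⟨hloop, hsum⟩ := Prod.ext_iff.1 ((iterate_skewProduct T f m x 0).symm.trans hm)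
    obtain ⟨q, rfl⟩ := IsPeriodicPt.minimalPeriod_dvd hloop
    exact ⟨q, by simpa only [zero_add, sum_loops hx] using hsum⟩
  · rintro htop ⟨x, a⟩ ⟨hx, -⟩ ⟨y, b⟩ ⟨hy, -⟩
    obtain ⟨m, rfl⟩ := ht x hx y hy
    obtain ⟨q, hq⟩ : b - (a + birkhoffSum T f m x) ∈ AddSubmonoid.multiples (∑ y ∈ s, f y) :=
      htop ▸ AddSubmonoid.mem_top _
    have hloop : T^[minimalPeriod T (T^[m] x) * q] (T^[m] x) = T^[m] x :=
      (isPeriodicPt_minimalPeriod T _).mul_const q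
    refine ⟨minimalPeriod T (T^[m] x) * q + m, ?_⟩
    rw [iterate_add_apply, iterate_skewProduct, iterate_skewProduct, hloop, sum_loops hy]
    exact Prod.ext rfl (add_eq_of_eq_sub' hq)

/-- The level `n` of the tree of words over a finite alphabet: the words of length `n`. -/
def level (A : Type*) [Fintype A] (n : ℕ) : Finset (List A) :=
  univ.map ⟨List.ofFn (n := n), List.ofFn_injective⟩

section level

variable {A : Type*} [Fintype A] {n : ℕ}

theorem mem_level {u : List A} : u ∈ level A n ↔ u.length = n := by
  simp only [level, mem_map, mem_univ, true_and, Embedding.coeFn_mk]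
  constructor
  · rintro ⟨w, rfl⟩
    exact List.length_ofFn
  · rintro rfl
    exact ⟨u.get, List.ofFn_get u⟩

theorem sum_level {M : Type*} [AddCommMonoid M] (f : List A → M) :
    ∑ u ∈ level A n, f u = ∑ w : Fin n → A, f (List.ofFn w) :=
  sum_map _ _ _

theorem level_nonempty [Nonempty A] : (level A n).Nonempty :=
  univ_nonempty.map

theorem image_append_level :
    (fun p : List A × A ↦ p.1 ++ [p.2]) '' ((level A n : Set (List A)) ×ˢ Set.univ) =
      level A (n + 1) := by
  ext v
  simp only [Set.mem_image, Set.mem_prod, Set.mem_univ, and_true, mem_coe, mem_level]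
  constructor
  · rintro ⟨⟨u, a⟩, rfl, rfl⟩
    exact List.length_append
  · intro hv
    obtain ⟨u, a, rfl⟩ := (List.eq_nil_or_concat' v).resolve_left
      (List.ne_nil_of_length_eq_add_one hv)
    rw [List.length_append, List.length_singleton, Nat.add_right_cancel_iff] at hv
    exact ⟨(u, a), hv, rfl⟩

end level

/-- The action on words of the tree automorphism with portrait `c`, where `c w` is the translation
by which the section at `w` permutes the first letter. -/
def portraitAct {A : Type*} [Add A] : (List A → A) → List A → List A
  | _, [] => []
  | c, a :: u => (a + c []) :: portraitAct (fun w ↦ c (a :: w)) u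

section portraitAct

variable {A : Type*}

theorem eq_portraitAct [Add A] {act : (List A → A) → List A → List A}
    (hnil : ∀ c, act c [] = [])
    (hcons : ∀ c a u, act c (a :: u) = (a + c []) :: act (fun w ↦ c (a :: w)) u) :
    act = portraitAct := by
  funext c u
  induction u generalizing c with
  | nil => rw [hnil, portraitAct]
  | cons a u ih => rw [hcons, ih, portraitAct]

theorem length_portraitAct [Add A] (c : List A → A) (u : List A) :
    (portraitAct c u).length = u.length := by
  induction u generalizing c with
  | nil => rfl
  | cons a u ih => rw [portraitAct, List.length_cons, ih, List.length_cons]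

theorem portraitAct_append_singleton [Add A] (c : List A → A) (u : List A) (a : A) :
    portraitAct c (u ++ [a]) = portraitAct c u ++ [a + c u] := by
  induction u generalizing c with
  | nil => rfl
  | cons b u ih => rw [List.cons_append, portraitAct, ih, portraitAct, List.cons_append]

theorem mapsTo_portraitAct_level [Add A] [Fintype A] (c : List A → A) (n : ℕ) :
    Set.MapsTo (portraitAct c) (level A n) (level A n) := fun u hu ↦
  mem_level.2 ((length_portraitAct c u).trans (mem_level.1 hu))

theorem iterateTransitiveOn_level_zero [Fintype A] (T : List A → List A) :
    IterateTransitiveOn T (level A 0) := by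
  intro u hu v hv
  rw [mem_coe, mem_level, List.length_eq_zero_iff] at hu hv
  exact ⟨0, hu.trans hv.symm⟩

theorem iterateTransitiveOn_level_succ_iff [AddCommGroup A] [Fintype A] {c : List A → A} {n : ℕ}
    (ht : IterateTransitiveOn (portraitAct c) (level A n)) :
    IterateTransitiveOn (portraitAct c) (level A (n + 1)) ↔
      AddSubmonoid.multiples (∑ w : Fin n → A, c (List.ofFn w)) = ⊤ := by
  have hsemi : Semiconj (fun p : List A × A ↦ p.1 ++ [p.2]) (skewProduct (portraitAct c) c)
      (portraitAct c) := fun p ↦ (portraitAct_append_singleton c p.1 p.2).symm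
  have hinj : Injective fun p : List A × A ↦ p.1 ++ [p.2] := fun p q h ↦
    Prod.ext_iff.2 (List.append_singleton_inj.1 h)
  rw [← image_append_level, IterateTransitiveOn.image_iff hsemi hinj,
    iterateTransitiveOn_skewProduct_iff level_nonempty (mapsTo_portraitAct_level c n) ht, sum_level]

theorem iterateTransitiveOn_level_iff [AddCommGroup A] [Fintype A] (c : List A → A) :
    (∀ n, IterateTransitiveOn (portraitAct c) (level A n)) ↔
      ∀ n, AddSubmonoid.multiples (∑ w : Fin n → A, c (List.ofFn w)) = ⊤ := by
  refine ⟨fun ht n ↦ (iterateTransitiveOn_level_succ_iff (ht n)).1 (ht (n + 1)), fun hc n ↦ ?_⟩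
  induction n with
  | zero => exact iterateTransitiveOn_level_zero _
  | succ n ih => exact (iterateTransitiveOn_level_succ_iff ih).2 (hc n)

end portraitAct

theorem multiples_eq_top_iff_isUnit {R : Type*} [CommSemiring R]
    (hcast : Surjective (Nat.cast : ℕ → R)) {a : R} :
    AddSubmonoid.multiples a = ⊤ ↔ IsUnit a := by
  simp only [AddSubmonoid.eq_top_iff', AddSubmonoid.mem_multiples_iff, nsmul_eq_mul]
  constructor
  · intro h
    obtain ⟨n, hn⟩ := h 1
    exact IsUnit.of_mul_eq_one_right _ hn
  · intro ha x
    obtain ⟨b, hb⟩ := ha.exists_left_inv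
    obtain ⟨n, hn⟩ := hcast (x * b)
    exact ⟨n, by rw [hn, mul_assoc, hb, mul_one]⟩

theorem spherically_transitive_iff_level_sums_unit_general
    {A : Type*} [AddCommGroup A] [Fintype A]
    (act : (List A → A) → List A → List A)
    (hnil : ∀ c, act c [] = [])
    (hcons : ∀ c a u, act c (a :: u) = (a + c []) :: act (fun w => c (a :: w)) u)
    (c : List A → A) :
    (∀ (n : ℕ) (u v : List A), u.length = n → v.length = n → ∃ m : ℕ, (act c)^[m] u = v) ↔
      (∀ n : ℕ, AddSubmonoid.multiples (∑ w : Fin n → A, c (List.ofFn w)) = ⊤) := by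
  rw [eq_portraitAct hnil hcons, ← iterateTransitiveOn_level_iff]
  simp only [IterateTransitiveOn, mem_coe, mem_level]
  exact forall₂_congr fun n u ↦ forall_comm

/-- An element of the infinite iterated wreath product `ℤ/kℤ ≀ ℤ/kℤ ≀ ⋯`
given by its portrait `c` is spherically transitive if and only if all its
level sums are units of `ZMod k`. -/
theorem spherically_transitive_iff_level_sums_unit
    (k : ℕ) [NeZero k]
    (act : (List (ZMod k) → ZMod k) → List (ZMod k) → List (ZMod k))
    (hnil : ∀ c, act c [] = [])
    (hcons : ∀ c a u, act c (a :: u) = (a + c []) :: act (fun w => c (a :: w)) u)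
    (c : List (ZMod k) → ZMod k) :
    (∀ (n : ℕ) (u v : List (ZMod k)), u.length = n → v.length = n →
        ∃ m : ℕ, (act c)^[m] u = v) ↔
      (∀ n : ℕ, IsUnit (∑ w : Fin n → ZMod k, c (List.ofFn w))) := by
  simpa only [multiples_eq_top_iff_isUnit (ZMod.natCast_zmod_surjective (n := k))] using
    spherically_transitive_iff_level_sums_unit_general act hnil hcons c
end

section
/- Let k ≥ 1 and let act be the tree action of portraits as follows: act : (List (ZMod k) → ZMod k) → List (ZMod k) → List (ZMod k) is the unique function satisfying act c [] = [] and act c (a :: u) = (a + c []) :: act (fun w => c (a :: w)) u. Suppose c, c' : List (ZMod k) → ZMod k are two portraits, each spherically transitive (for every n and all lists u, v of length n over ZMod k there exists m with (act c)^[m] u = v, and likewise for c'). Then there exists a portrait d : List (ZMod k) → ZMod k with act d (act c u) = act c' (act d u) for all lists u (i.e. c and c' are conjugate in the infinite iterated wreath product) if and only if for every n : ℕ the sum over all words w : Fin n → ZMod k of c (List.ofFn w) equals the sum over all such w of c' (List.ofFn w). -/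
/-!
For portraits `c`, `c'`, `d`, the relation `act d ∘ act c = act c' ∘ act d` is equivalent to the
cohomological equation `c u + d (act c u) = d u + c' (act d u)` on words. Summing it over a level
gives the equality of level sums.

Conversely, let `c` be spherically transitive with the same level sums as `c'`. The conjugator is
forced once it is asked to fix every word `0ⁿ`: it must send `c^m 0ⁿ` to `c'^m 0ⁿ`, so its label
there is the difference of the Birkhoff sums of `c'` and `c` along the first `m` points of the
orbits of `0ⁿ`. These labels are well defined because, if the conjugation already holds on level
`n`, that difference is a Birkhoff sum over the single orbit of `act c` on level `n`, and over one
full period it is the difference of the level sums, which vanishes.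
-/

open Function

section BirkhoffSum

variable {α M : Type*} [AddCommMonoid M] {T : α → α} {f : α → M} {x : α}

lemma periodic_birkhoffSum {p : ℕ} (hx : IsPeriodicPt T p x) (hsum : birkhoffSum T f p x = 0) :
    Periodic (fun m ↦ birkhoffSum T f m x) p := fun m ↦ by
  simp only [add_comm m p, birkhoffSum_add, hsum, zero_add, hx.eq]

lemma birkhoffSum_eq_of_iterate_eq (hx : x ∈ periodicPts T)
    (hsum : birkhoffSum T f (minimalPeriod T x) x = 0) {m n : ℕ} (h : T^[m] x = T^[n] x) :
    birkhoffSum T f m x = birkhoffSum T f n x := by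
  have hpos := minimalPeriod_pos_of_mem_periodicPts hx
  have hmod : m % minimalPeriod T x = n % minimalPeriod T x :=
    iterate_injOn_Iio_minimalPeriod (Nat.mod_lt m hpos) (Nat.mod_lt n hpos) <| by
      simpa only [iterate_mod_minimalPeriod_eq] using h
  have hper := periodic_birkhoffSum (isPeriodicPt_minimalPeriod T x) hsum
  rw [← hper.map_mod_nat m, hmod, hper.map_mod_nat n]

lemma sum_eq_birkhoffSum_minimalPeriod (hx : x ∈ periodicPts T) {s : Finset α}
    (hs : ∀ y, y ∈ s ↔ ∃ m : ℕ, T^[m] x = y) :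
    ∑ y ∈ s, f y = birkhoffSum T f (minimalPeriod T x) x := by
  have hpos := minimalPeriod_pos_of_mem_periodicPts hx
  refine (Finset.sum_nbij (T^[·] x) (fun m _ ↦ (hs _).2 ⟨m, rfl⟩) ?_ ?_ fun _ _ ↦ rfl).symm
  · simpa only [Finset.coe_range] using iterate_injOn_Iio_minimalPeriod
  · intro y hy
    obtain ⟨m, rfl⟩ := (hs y).1 hy
    exact ⟨m % minimalPeriod T x, by simpa using Nat.mod_lt m hpos, iterate_mod_minimalPeriod_eq⟩

end BirkhoffSum

/-- The finite set of words of length `n`, i.e. level `n` of the tree. -/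
def words (A : Type*) [Fintype A] (n : ℕ) : Finset (List A) :=
  Finset.univ.map ⟨(List.ofFn : (Fin n → A) → List A), List.ofFn_injective⟩

@[simp]
lemma mem_words {A : Type*} [Fintype A] {n : ℕ} {u : List A} : u ∈ words A n ↔ u.length = n := by
  simp only [words, Finset.mem_map, Finset.mem_univ, true_and, Embedding.coeFn_mk]
  constructor
  · rintro ⟨w, rfl⟩
    exact List.length_ofFn
  · rintro rfl
    exact ⟨u.get, List.ofFn_get u⟩

/-- The sum of the values of `f` on level `n` of the tree. For a portrait `f`, this is the `n`-th
coefficient of its image in the abelianization of the wreath product. -/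
def levelSum {A M : Type*} [Fintype A] [AddCommMonoid M] (f : List A → M) (n : ℕ) : M :=
  ∑ w : Fin n → A, f (List.ofFn w)

lemma levelSum_eq_sum_words {A M : Type*} [Fintype A] [AddCommMonoid M] (f : List A → M) (n : ℕ) :
    levelSum f n = ∑ u ∈ words A n, f u := by
  simp [levelSum, words]

/-- A labelling of the rooted tree of words over `A` by elements of `A`. It encodes the element of
the iterated wreath product which translates the letter following the word `w` by the label of
`w`. -/
abbrev Portrait (A : Type*) := List A → A

namespace Portrait

section Add

variable {A : Type*} [Add A]

/-- The action of a portrait on words. -/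
def act : Portrait A → List A → List A
  | _, [] => []
  | c, a :: u => (a + c []) :: act (fun w ↦ c (a :: w)) u

lemma eq_act {φ : Portrait A → List A → List A} (hnil : ∀ c, φ c [] = [])
    (hcons : ∀ c a u, φ c (a :: u) = (a + c []) :: φ (fun w ↦ c (a :: w)) u) : φ = act := by
  funext c u
  induction u generalizing c with
  | nil => exact hnil c
  | cons a u ih => rw [hcons, ih, act]

@[simp]
lemma length_act (c : Portrait A) (u : List A) : (act c u).length = u.length := by
  induction u generalizing c with
  | nil => rfl
  | cons a u ih => simp [act, ih]

lemma act_append_singleton (c : Portrait A) (u : List A) (x : A) :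
    act c (u ++ [x]) = act c u ++ [x + c u] := by
  induction u generalizing c with
  | nil => rfl
  | cons a u ih => simp [act, ih]

lemma act_injective [IsRightCancelAdd A] (c : Portrait A) : Injective (act c) := by
  intro u
  induction u generalizing c with
  | nil =>
    rintro (_ | ⟨b, v⟩) h
    · rfl
    · simp [act] at h
  | cons a u ih =>
    rintro (_ | ⟨b, v⟩) h
    · simp [act] at h
    · obtain ⟨hab, huv⟩ := List.cons_eq_cons.1 h
      obtain rfl := add_right_cancel hab
      rw [ih _ huv]

lemma image_act_words [IsRightCancelAdd A] [Fintype A] [DecidableEq A] (c : Portrait A) (n : ℕ) :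
    (words A n).image (act c) = words A n := by
  refine Finset.eq_of_subset_of_card_le (fun _ h ↦ ?_)
    (Finset.card_image_of_injective _ c.act_injective).ge
  obtain ⟨u, hu, rfl⟩ := Finset.mem_image.1 h
  simpa using hu

lemma levelSum_comp_act [IsRightCancelAdd A] [Fintype A] {M : Type*} [AddCommMonoid M]
    (c : Portrait A) (f : List A → M) (n : ℕ) :
    levelSum (fun u ↦ f (act c u)) n = levelSum f n := by
  classical
  rw [levelSum_eq_sum_words, levelSum_eq_sum_words, ← Finset.sum_image c.act_injective.injOn,
    image_act_words]

/-- Spherical transitivity: the forward iterates of `act c` are transitive on every level. -/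
def IsSphericallyTransitive (c : Portrait A) : Prop :=
  ∀ u v : List A, u.length = v.length → ∃ m : ℕ, (act c)^[m] u = v

end Add

lemma length_iterate_act {A : Type*} [Add A] (c : Portrait A) (m : ℕ) (u : List A) :
    ((act c)^[m] u).length = u.length :=
  congrFun (iterate_invariant (funext c.length_act : List.length ∘ act c = List.length) m) u

lemma iterate_act_append_singleton {A : Type*} [AddCommMonoid A] (c : Portrait A) (m : ℕ)
    (u : List A) (x : A) :
    (act c)^[m] (u ++ [x]) = (act c)^[m] u ++ [x + birkhoffSum (act c) c m u] := by
  induction m with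
  | zero => simp
  | succ m ih =>
    simp only [iterate_succ_apply', ih, act_append_singleton, birkhoffSum_succ, add_assoc]

lemma add_apply_act_of_semiconj {A : Type*} [AddMonoid A] {c c' d : Portrait A}
    (h : Semiconj (act d) (act c) (act c')) (u : List A) :
    c u + d (act c u) = d u + c' (act d u) := by
  have hu := h (u ++ [0])
  simp only [act_append_singleton, h.eq u, zero_add] at hu
  simpa using hu

lemma levelSum_eq_of_semiconj {A : Type*} [AddCancelCommMonoid A] [Fintype A] {c c' d : Portrait A}
    (h : Semiconj (act d) (act c) (act c')) (n : ℕ) : levelSum c n = levelSum c' n := by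
  have hsum : levelSum c n + levelSum (fun u ↦ d (act c u)) n =
      levelSum d n + levelSum (fun u ↦ c' (act d u)) n := by
    simp only [levelSum, ← Finset.sum_add_distrib, add_apply_act_of_semiconj h]
  rw [levelSum_comp_act, levelSum_comp_act, add_comm] at hsum
  exact add_left_cancel hsum

namespace IsSphericallyTransitive

section Add

variable {A : Type*} [Add A] {c : Portrait A}

lemma mem_periodicPts (hc : c.IsSphericallyTransitive) (u : List A) : u ∈ periodicPts (act c) := by
  obtain ⟨m, hm⟩ := hc (act c u) u (c.length_act u)
  exact mk_mem_periodicPts m.succ_pos hm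

lemma levelSum_eq_birkhoffSum [Fintype A] {M : Type*} [AddCommMonoid M]
    (hc : c.IsSphericallyTransitive) (f : List A → M) (u : List A) :
    levelSum f u.length = birkhoffSum (act c) f (minimalPeriod (act c) u) u := by
  rw [levelSum_eq_sum_words]
  refine sum_eq_birkhoffSum_minimalPeriod (hc.mem_periodicPts u) fun v ↦ ?_
  rw [mem_words]
  constructor
  · exact fun hv ↦ hc u v hv.symm
  · rintro ⟨m, rfl⟩
    exact c.length_iterate_act m u

end Add

lemma exists_iterate_replicate {A : Type*} [AddZeroClass A] {c : Portrait A}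
    (hc : c.IsSphericallyTransitive) (u : List A) :
    ∃ m : ℕ, (act c)^[m] (List.replicate u.length 0) = u :=
  hc _ u List.length_replicate

variable {A : Type*} [AddCommGroup A] {c : Portrait A}

/-- The portrait whose label at `c^m 0ⁿ` is the difference of the Birkhoff sums of `c'` and `c` over
`m` steps from `0ⁿ`; the number `m` is chosen arbitrarily. -/
noncomputable def conjugator (hc : c.IsSphericallyTransitive) (c' : Portrait A) : Portrait A :=
  fun u ↦
    let m := (hc.exists_iterate_replicate u).choose
    let o := List.replicate u.length 0
    birkhoffSum (act c') c' m o - birkhoffSum (act c) c m o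

variable [Fintype A] {c' : Portrait A}

-- Independence of the choice of `m` in `conjugator`.
lemma conjugator_iterate (hc : c.IsSphericallyTransitive) {n : ℕ}
    (hsum : levelSum c n = levelSum c' n) {d : Portrait A}
    (hd : ∀ m : ℕ, act d ((act c)^[m] (List.replicate n 0)) = (act c')^[m] (List.replicate n 0))
    (m : ℕ) :
    hc.conjugator c' ((act c)^[m] (List.replicate n 0)) =
      birkhoffSum (act c') c' m (List.replicate n 0) -
        birkhoffSum (act c) c m (List.replicate n 0) := by
  set o := List.replicate n (0 : A) with ho
  have hlen : o.length = n := List.length_replicate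
  let f : List A → A := (fun v ↦ c' (act d v)) - c
  have hf (j : ℕ) : birkhoffSum (act c') c' j o - birkhoffSum (act c) c j o =
      birkhoffSum (act c) f j o := by
    rw [birkhoffSum_sub]
    simp only [birkhoffSum, hd]
  have hperiod : birkhoffSum (act c) f (minimalPeriod (act c) o) o = 0 := calc
    _ = levelSum (fun v ↦ c' (act d v)) n - levelSum c n := by
      rw [← hc.levelSum_eq_birkhoffSum, hlen]
      exact Finset.sum_sub_distrib ..
    _ = 0 := by rw [levelSum_comp_act, hsum, sub_self]
  have htime := (hc.exists_iterate_replicate ((act c)^[m] o)).choose_spec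
  rw [conjugator]
  simp only [length_iterate_act, hlen, ← ho, hf] at htime ⊢
  exact birkhoffSum_eq_of_iterate_eq (hc.mem_periodicPts o) hperiod htime

lemma act_conjugator_iterate (hc : c.IsSphericallyTransitive)
    (hsum : ∀ n, levelSum c n = levelSum c' n) (n m : ℕ) :
    act (hc.conjugator c') ((act c)^[m] (List.replicate n 0)) =
      (act c')^[m] (List.replicate n 0) := by
  induction n generalizing m with
  | zero =>
    have hnil (e : Portrait A) (j : ℕ) : (act e)^[j] [] = [] := iterate_fixed rfl j
    simp only [List.replicate_zero, hnil, act]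
  | succ n ih =>
    simp only [List.replicate_succ', iterate_act_append_singleton, act_append_singleton, ih,
      hc.conjugator_iterate (hsum n) ih, zero_add, add_sub_cancel]

lemma semiconj_conjugator (hc : c.IsSphericallyTransitive)
    (hsum : ∀ n, levelSum c n = levelSum c' n) :
    Semiconj (act (hc.conjugator c')) (act c) (act c') := by
  intro u
  obtain ⟨m, hm⟩ := hc.exists_iterate_replicate u
  rw [← hm, ← iterate_succ_apply' (act c), hc.act_conjugator_iterate hsum,
    hc.act_conjugator_iterate hsum, iterate_succ_apply']

end IsSphericallyTransitive

end Portrait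

open Portrait in
theorem conjugate_iff_level_sums_eq_general {A : Type*} [AddCommGroup A] [Fintype A]
    {c : Portrait A} (hc : c.IsSphericallyTransitive) (c' : Portrait A) :
    (∃ d : Portrait A, Semiconj (act d) (act c) (act c')) ↔
      ∀ n, levelSum c n = levelSum c' n :=
  ⟨fun ⟨_, hd⟩ ↦ levelSum_eq_of_semiconj hd, fun hsum ↦ ⟨_, hc.semiconj_conjugator hsum⟩⟩

/-- Two spherically transitive elements of the infinite iterated wreath
product `ℤ/kℤ ≀ ℤ/kℤ ≀ ⋯`, given by their portraits, are conjugate if and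
only if all their level sums agree. -/
theorem conjugate_iff_level_sums_eq
    (k : ℕ) [NeZero k]
    (act : (List (ZMod k) → ZMod k) → List (ZMod k) → List (ZMod k))
    (hnil : ∀ c, act c [] = [])
    (hcons : ∀ c a u, act c (a :: u) = (a + c []) :: act (fun w => c (a :: w)) u)
    (c c' : List (ZMod k) → ZMod k)
    (hc : ∀ (n : ℕ) (u v : List (ZMod k)), u.length = n → v.length = n →
      ∃ m : ℕ, (act c)^[m] u = v)
    (hc' : ∀ (n : ℕ) (u v : List (ZMod k)), u.length = n → v.length = n →
      ∃ m : ℕ, (act c')^[m] u = v) :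
    (∃ d : List (ZMod k) → ZMod k, ∀ u : List (ZMod k),
        act d (act c u) = act c' (act d u)) ↔
      (∀ n : ℕ, ∑ w : Fin n → ZMod k, c (List.ofFn w) =
        ∑ w : Fin n → ZMod k, c' (List.ofFn w)) := by
  obtain rfl : act = Portrait.act := Portrait.eq_act hnil hcons
  exact conjugate_iff_level_sums_eq_general (fun u v h ↦ hc _ u v h rfl) c'
end

section
/- Let n be a natural number, A : Matrix (Fin n) (Fin n) (ZMod 2), v : Fin n → ZMod 2, and i : Fin n. Then ((A^j).mulVec v) i = 1 for every natural number j if and only if ((A^j).mulVec v) i = 1 for every j ≤ n + 1. -/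
/-!
The coefficients are the values at the powers of `X` of the linear functional
`p ↦ (p(A) *ᵥ v) i` on polynomials, which by Cayley–Hamilton vanishes on the multiples of the monic
polynomial `χ = A.charpoly`, of degree `n`. If it agrees on `1, X, …, X ^ n` with `p ↦ p(r) c`, then
evaluating both at `χ` gives `χ(r) c = 0`, so `p ↦ p(r) c` vanishes on the multiples of `χ` as well.
Division with remainder by `χ` then shows that the two functionals coincide. The series `∑ t ^ j` of
the odometer is the case `r = c = 1`.
-/

open Polynomial

theorem linearMap_eq_of_degree_lt {R M : Type*} [Semiring R] [AddCommMonoid M] [Module R M]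
    {f g : R[X] →ₗ[R] M} {n : ℕ} (h : ∀ j < n, f (X ^ j) = g (X ^ j)) {p : R[X]}
    (hp : p.degree < n) : f p = g p := by
  classical
  rw [← mem_degreeLT, degreeLT_eq_span_X_pow] at hp
  refine LinearMap.eqOn_span (fun x hx ↦ ?_) hp
  obtain ⟨j, hj, rfl⟩ := Finset.mem_image.mp (Finset.mem_coe.mp hx)
  exact h j (Finset.mem_range.mp hj)

theorem linearMap_eq_of_monic_of_map_mul_eq_zero {R M : Type*} [Ring R] [AddCommMonoid M]
    [Module R M] {f g : R[X] →ₗ[R] M} {q : R[X]} (hq : q.Monic) (hf : ∀ p, f (q * p) = 0)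
    (hg : ∀ p, g (q * p) = 0) (h : ∀ j < q.natDegree, f (X ^ j) = g (X ^ j)) : f = g := by
  nontriviality R
  refine LinearMap.ext fun p ↦ ?_
  have hrem : (p %ₘ q).degree < q.natDegree :=
    degree_eq_natDegree hq.ne_zero ▸ degree_modByMonic_lt p hq
  rw [← modByMonic_add_div p q, map_add, map_add, hf, hg, linearMap_eq_of_degree_lt h hrem]

theorem map_eq_eval_smul_of_monic_of_map_mul_eq_zero {R M : Type*} [CommRing R] [AddCommMonoid M]
    [Module R M] {f : R[X] →ₗ[R] M} {q : R[X]} (hq : q.Monic) (hf : ∀ p, f (q * p) = 0)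
    {r : R} {m : M} (h : ∀ j ≤ q.natDegree, f (X ^ j) = r ^ j • m) (p : R[X]) :
    f p = p.eval r • m := by
  let g : R[X] →ₗ[R] M := (leval r).smulRight m
  have hfg : ∀ j ≤ q.natDegree, f (X ^ j) = g (X ^ j) := by simpa [g] using h
  have hroot : q.eval r • m = 0 := calc
    q.eval r • m = f q := (linearMap_eq_of_degree_lt (fun j hj ↦ hfg j (Nat.lt_succ_iff.mp hj))
      (degree_le_natDegree.trans_lt (mod_cast q.natDegree.lt_succ_self))).symm
    _ = 0 := by simpa only [mul_one] using hf 1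
  have hg (p : R[X]) : g (q * p) = 0 := by
    simp only [g, LinearMap.smulRight_apply, leval_apply, eval_mul, mul_comm (q.eval r), mul_smul,
      hroot, smul_zero]
  exact LinearMap.congr_fun
    (linearMap_eq_of_monic_of_map_mul_eq_zero hq hf hg fun j hj ↦ hfg j hj.le) p

section Matrix

variable {R ι : Type*} [CommRing R] [Fintype ι] [DecidableEq ι]

/-- The linear functional `p ↦ (p(A) *ᵥ v) i`, whose values at the powers of `X` are the
coefficients of the series attached to state `i` of an automaton with incidence matrix `A` and
labeling vector `v`. -/
noncomputable def coefficientFunctional (A : Matrix ι ι R) (v : ι → R) (i : ι) : R[X] →ₗ[R] R :=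
  LinearMap.proj i ∘ₗ (Matrix.mulVecBilin R R).flip v ∘ₗ (aeval A).toLinearMap

theorem coefficientFunctional_apply (A : Matrix ι ι R) (v : ι → R) (i : ι) (p : R[X]) :
    coefficientFunctional A v i p = (aeval A p).mulVec v i :=
  rfl

theorem coefficientFunctional_X_pow (A : Matrix ι ι R) (v : ι → R) (i : ι) (j : ℕ) :
    coefficientFunctional A v i (X ^ j) = (A ^ j).mulVec v i := by
  rw [coefficientFunctional_apply, aeval_X_pow]

theorem coefficientFunctional_charpoly_mul (A : Matrix ι ι R) (v : ι → R) (i : ι) (p : R[X]) :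
    coefficientFunctional A v i (A.charpoly * p) = 0 := by
  rw [coefficientFunctional_apply, map_mul, A.aeval_self_charpoly, zero_mul, Matrix.zero_mulVec,
    Pi.zero_apply]

theorem zmod_two_coefficients_one_iff_finite_check_general (A : Matrix ι ι R) (v : ι → R) (i : ι)
    (r c : R) :
    (∀ j : ℕ, ((A ^ j).mulVec v) i = r ^ j * c) ↔
      (∀ j ≤ Fintype.card ι, ((A ^ j).mulVec v) i = r ^ j * c) := by
  refine ⟨fun h j _ ↦ h j, fun h j ↦ ?_⟩
  nontriviality R
  have hinit : ∀ k ≤ A.charpoly.natDegree,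
      coefficientFunctional A v i (X ^ k) = r ^ k • c := by
    simpa only [A.charpoly_natDegree_eq_dim, coefficientFunctional_X_pow, smul_eq_mul] using h
  simpa only [coefficientFunctional_X_pow, eval_pow, eval_X, smul_eq_mul] using
    map_eq_eval_smul_of_monic_of_map_mul_eq_zero A.charpoly_monic
      (coefficientFunctional_charpoly_mul A v i) hinit (X ^ j)

end Matrix

/-- Over `ZMod 2`, the coefficients `((A ^ j).mulVec v) i` all equal `1` if
and only if they equal `1` for `j ≤ n + 1`. -/
theorem zmod_two_coefficients_one_iff_finite_check
    (n : ℕ) (A : Matrix (Fin n) (Fin n) (ZMod 2))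
    (v : Fin n → ZMod 2) (i : Fin n) :
    (∀ j : ℕ, ((A ^ j).mulVec v) i = 1) ↔
      (∀ j ≤ n + 1, ((A ^ j).mulVec v) i = 1) := by
  have hgeom := zmod_two_coefficients_one_iff_finite_check_general A v i 1 1
  simp only [one_pow, mul_one, Fintype.card_fin] at hgeom
  exact ⟨fun h j _ ↦ h j, fun h ↦ hgeom.mpr fun j hj ↦ h j (Nat.le_succ_of_le hj)⟩
end
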